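/- arXiv:2009.09604 — 4 statements merged into one kernel-verified Lean document; each statement's English description precedes it below -/
import Mathlib

section
/- Let S be a countable set and ε ∈ ℝ. Suppose P = Σ_{i∈I} α_i·P_i and Q = Σ_{i∈I} β_i·Q_i, where I is a countable index set, (α_i)_{i∈I} and (β_i)_{i∈I} are families of strictly positive reals each summing to 1, and each P_i and Q_i is a probability distribution on S. Then d_ε(P‖Q) ≤ Σ_{i∈I} α_i · d_{ε + ln(β_i/α_i)}(P_i‖Q_i). -/
/-- Hockey-stick divergence `d_ε(P‖Q) = Σ_x max(P x − e^ε·Q x, 0)` for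
distributions given by their probability mass functions on a countable set. -/
noncomputable def hsDiv {S : Type*} (ε : ℝ) (P Q : S → ℝ) : ℝ :=
  ∑' x, max (P x - Real.exp ε * Q x) 0

/-!
Scaling the two arguments by `a, b > 0` turns `a · d_{ε + ln (b / a)}(P‖Q)` into `d_ε(a P‖b Q)`.
The mixture bound is thus countable subadditivity of `d_ε` in the pair `(P, Q)`, which follows from
`(∑ f)⁺ ≤ ∑ f⁺` applied pointwise to `α_i P_i - e^ε β_i Q_i`, and an exchange of summations.
-/

open Function

section Summability

lemma summable_of_tsum_ne_zero {ι M : Type*} [AddCommMonoid M] [TopologicalSpace M] {f : ι → M}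
    (hf : ∑' i, f i ≠ 0) : Summable f :=
  not_imp_comm.1 tsum_eq_zero_of_not_summable hf

lemma summable_prod_mul_of_tsum_norm_le {ι κ R : Type*} [NonUnitalNormedRing R] [CompleteSpace R]
    {w : ι → R} {f : ι → κ → R} {C : ℝ} (hw : Summable fun i => ‖w i‖)
    (hf : ∀ i, Summable fun x => ‖f i x‖) (hC : ∀ i, ∑' x, ‖f i x‖ ≤ C) :
    Summable fun p : ι × κ => w p.1 * f p.1 p.2 := by
  have hnorm : Summable fun p : ι × κ => ‖w p.1‖ * ‖f p.1 p.2‖ := by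
    refine (summable_prod_of_nonneg fun _ => mul_nonneg (norm_nonneg _) (norm_nonneg _)).2
      ⟨fun i => (hf i).mul_left ‖w i‖, ?_⟩
    simp only [tsum_mul_left]
    exact (hw.mul_right C).of_nonneg_of_le
      (fun i => mul_nonneg (norm_nonneg _) (tsum_nonneg fun _ => norm_nonneg _))
      fun i => mul_le_mul_of_nonneg_left (hC i) (norm_nonneg _)
  exact hnorm.of_norm_bounded fun p => norm_mul_le _ _

lemma summable_prod_mul_of_tsum_eq_one {ι κ : Type*} {w : ι → ℝ} {f : ι → κ → ℝ}
    (hw : Summable w) (hf_nonneg : ∀ i x, 0 ≤ f i x) (hf_tsum : ∀ i, ∑' x, f i x = 1) :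
    Summable fun p : ι × κ => w p.1 * f p.1 p.2 := by
  have hf (i : ι) : Summable (f i) := summable_of_tsum_ne_zero (by simp [hf_tsum])
  refine summable_prod_mul_of_tsum_norm_le (C := 1) hw.norm (fun i => (hf i).norm) fun i => ?_
  simp only [Real.norm_of_nonneg (hf_nonneg i _), hf_tsum, le_refl]

end Summability

section PosPart

variable {ι κ : Type*}

lemma summable_posPart {f : ι → ℝ} (hf : Summable f) : Summable fun i => (f i)⁺ :=
  hf.abs.of_nonneg_of_le (fun _ => posPart_nonneg _) fun _ => sup_le (le_abs_self _) (abs_nonneg _)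

lemma posPart_tsum_le {M : Type*} [AddCommGroup M] [Lattice M] [IsOrderedAddMonoid M]
    [TopologicalSpace M] [OrderClosedTopology M] {f : ι → M}
    (hf : Summable f) (hf_pos : Summable fun i => (f i)⁺) : (∑' i, f i)⁺ ≤ ∑' i, (f i)⁺ :=
  sup_le (hf.tsum_le_tsum (fun i => le_posPart (f i)) hf_pos)
    (tsum_nonneg fun i => posPart_nonneg (f i))

lemma tsum_posPart_tsum_le {f : ι → κ → ℝ} (hf : Summable (uncurry f)) :
    ∑' x, (∑' i, f i x)⁺ ≤ ∑' i, ∑' x, (f i x)⁺ := by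
  have hf_pos : Summable (uncurry fun i x => (f i x)⁺) := summable_posPart hf
  have posPart_le (x : κ) : (∑' i, f i x)⁺ ≤ ∑' i, (f i x)⁺ :=
    posPart_tsum_le (hf.prod_symm.prod_factor x) (hf_pos.prod_symm.prod_factor x)
  calc ∑' x, (∑' i, f i x)⁺
      ≤ ∑' x, ∑' i, (f i x)⁺ :=
        (summable_posPart hf.prod_symm.prod).tsum_le_tsum posPart_le hf_pos.prod_symm.prod
    _ = ∑' i, ∑' x, (f i x)⁺ := hf_pos.tsum_comm

end PosPart

section HockeyStick

variable {S I : Type*}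

lemma hsDiv_eq_tsum_posPart (ε : ℝ) (P Q : S → ℝ) :
    hsDiv ε P Q = ∑' x, (P x - Real.exp ε * Q x)⁺ :=
  rfl

lemma mul_hsDiv_add_log_div (ε : ℝ) {a b : ℝ} (ha : 0 < a) (hb : 0 < b) (P Q : S → ℝ) :
    a * hsDiv (ε + Real.log (b / a)) P Q = hsDiv ε (fun x => a * P x) (fun x => b * Q x) := by
  rw [hsDiv, hsDiv, ← tsum_mul_left]
  refine tsum_congr fun x => ?_
  rw [Real.exp_add, Real.exp_log (div_pos hb ha), mul_max_of_nonneg _ _ ha.le, mul_zero]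
  congr 1
  field_simp

theorem hsDiv_tsum_le (ε : ℝ) {P Q : I → S → ℝ} (hP : Summable (uncurry P))
    (hQ : Summable (uncurry Q)) :
    hsDiv ε (fun x => ∑' i, P i x) (fun x => ∑' i, Q i x) ≤ ∑' i, hsDiv ε (P i) (Q i) := by
  have tsum_diff (x : S) : ∑' i, (P i x - Real.exp ε * Q i x)
      = ∑' i, P i x - Real.exp ε * ∑' i, Q i x := by
    rw [← tsum_mul_left]
    exact (hP.prod_symm.prod_factor x).tsum_sub ((hQ.prod_symm.prod_factor x).mul_left _)
  simp only [hsDiv_eq_tsum_posPart, ← tsum_diff]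
  exact tsum_posPart_tsum_le (hP.sub (hQ.mul_left (Real.exp ε)))

theorem stmt_0_general (ε : ℝ) {α β : I → ℝ} {P Q : I → S → ℝ}
    (hα : ∀ i, 0 < α i) (hβ : ∀ i, 0 < β i)
    (hP : Summable fun p : I × S => α p.1 * P p.1 p.2)
    (hQ : Summable fun p : I × S => β p.1 * Q p.1 p.2) :
    hsDiv ε (fun x => ∑' i, α i * P i x) (fun x => ∑' i, β i * Q i x)
      ≤ ∑' i, α i * hsDiv (ε + Real.log (β i / α i)) (P i) (Q i) := by
  simp only [mul_hsDiv_add_log_div ε (hα _) (hβ _)]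
  exact hsDiv_tsum_le ε hP hQ

end HockeyStick

/-- mixture decomposition bound for the hockey-stick divergence. -/
theorem stmt_0 {S I : Type} [Countable S] [Countable I] (ε : ℝ)
    (α β : I → ℝ) (P Q : I → S → ℝ)
    (hα : ∀ i, 0 < α i) (hβ : ∀ i, 0 < β i)
    (hαsum : ∑' i, α i = 1) (hβsum : ∑' i, β i = 1)
    (hPnn : ∀ i x, 0 ≤ P i x) (hPsum : ∀ i, ∑' x, P i x = 1)
    (hQnn : ∀ i x, 0 ≤ Q i x) (hQsum : ∀ i, ∑' x, Q i x = 1) :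
    hsDiv ε (fun x => ∑' i, α i * P i x) (fun x => ∑' i, β i * Q i x)
      ≤ ∑' i, α i * hsDiv (ε + Real.log (β i / α i)) (P i) (Q i) :=
  stmt_0_general ε hα hβ
    (summable_prod_mul_of_tsum_eq_one (summable_of_tsum_ne_zero (by simp [hαsum])) hPnn hPsum)
    (summable_prod_mul_of_tsum_eq_one (summable_of_tsum_ne_zero (by simp [hβsum])) hQnn hQsum)
end

section
/- Let L ≥ 1 be an integer, Λ > 0, and let U, V be Borel probability distributions on [0,Λ] with E[U^j] = E[V^j] for all j ∈ {1,…,L}. Let D ∈ ℕ and θ, λ ∈ (ℝ_{≥0})^D with Σ_{i=1}^D θ_i = 1. Suppose Σ_{i : λ_i ≥ 2Λ²·θ_i} θ_i ≥ 1 − 1/(2Λ). Then ‖ E_{u←U}[Poi⃗(u·θ + λ)] − E_{v←V}[Poi⃗(v·θ + λ)] ‖²_TV ≤ 1/L!. -/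
open MeasureTheory

/-- The Poisson pmf with mean `μ` at `k`. -/
noncomputable def poiP (μ : ℝ) (k : ℕ) : ℝ := Real.exp (-μ) * μ ^ k / (Nat.factorial k)

/-- The mixture over `u ← U` of the product Poisson distribution
`Poi⃗(u·θ + λ)`, as a pmf on `ℕ^D`. -/
noncomputable def poiMix {D : ℕ} (U : Measure ℝ) (θ lam : Fin D → ℝ)
    (m : Fin D → ℕ) : ℝ :=
  ∫ u, ∏ i, poiP (u * θ i + lam i) (m i) ∂U

/-! Write `Q = Poi⃗(c·θ + λ)`. By Cauchy–Schwarz, `(2·TV)² ≤ ∑ (P_U - P_V)² / Q`. The right-hand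
side is the squared maximum mean discrepancy between `U` and `V` for the kernel
`K u v = ∑ Poi⃗(u·θ + λ) Poi⃗(v·θ + λ) / Q`, which a Poisson computation identifies as
`exp (κ (u - c) (v - c))`, where `κ` is the Fisher information of `u ↦ Poi⃗(u·θ + λ)` at `u = c`.
Expanding the same kernel in powers instead expresses that discrepancy as
`∑ j, κ ^ j / j! * (difference of the j-th moments about c) ^ 2`. Matching moments kill the terms
with `j ≤ L`, and for `c = Λ` the hypothesis on `θ` and `λ` gives `κ Λ² ≤ 1`, so that the remaining
ones add up to at most `4 / L!`. -/

open Finset Filter Polynomial Real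
open scoped Nat Topology

section InfiniteSums

theorem hasSum_prod_apply {ι R : Type*} {κ : ι → Type*} [Fintype ι] [NormedCommRing R]
    [NormOneClass R] [CompleteSpace R] {f : ∀ i, κ i → R} {s : ι → R}
    (hf : ∀ i, Summable fun k => ‖f i k‖) (hs : ∀ i, HasSum (f i) (s i)) :
    HasSum (fun m : ∀ i, κ i => ∏ i, f i (m i)) (∏ i, s i) := by
  classical
  have box_tendsto : Tendsto (fun S : ∀ i, Finset (κ i) => Fintype.piFinset S) atTop atTop :=
    tendsto_atTop_atTop.2 fun t => ⟨fun i => t.image fun m => m i, fun S hS m hm =>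
      Fintype.mem_piFinset.2 fun i => hS i (mem_image_of_mem _ hm)⟩
  have summable : Summable fun m : ∀ i, κ i => ∏ i, f i (m i) := by
    refine .of_norm (summable_of_sum_le (c := ∏ i, ∑' k, ‖f i k‖) (fun m => norm_nonneg _)
      fun t => ?_)
    obtain ⟨S, hS⟩ := (box_tendsto.eventually_ge_atTop t).exists
    calc ∑ m ∈ t, ‖∏ i, f i (m i)‖
        ≤ ∑ m ∈ Fintype.piFinset S, ∏ i, ‖f i (m i)‖ :=
          (sum_le_sum fun m _ => Finset.norm_prod_le _ _).trans
            (sum_le_sum_of_subset_of_nonneg hS fun _ _ _ => by positivity)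
      _ = ∏ i, ∑ k ∈ S i, ‖f i k‖ := (prod_univ_sum S fun i k => ‖f i k‖).symm
      _ ≤ ∏ i, ∑' k, ‖f i k‖ := by
          gcongr with i
          exact (hf i).sum_le_tsum _ fun _ _ => norm_nonneg _
  have box_sums : Tendsto (fun S : ∀ i, Finset (κ i) => ∑ m ∈ Fintype.piFinset S, ∏ i, f i (m i))
      atTop (𝓝 (∏ i, s i)) := by
    simp only [← prod_univ_sum]
    exact tendsto_finsetProd _ fun i _ => (hs i).comp <|
      (Function.monotone_eval i).tendsto_atTop_atTop fun t =>
        ⟨Function.update (fun _ => ∅) i t, by simp⟩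
  exact tendsto_nhds_unique (summable.hasSum.comp box_tendsto) box_sums ▸ summable.hasSum

theorem sq_tsum_abs_le_of_hasSum {ι : Type*} {q d : ι → ℝ} {Q X : ℝ} (hq : ∀ m, 0 ≤ q m)
    (hd : ∀ m, q m = 0 → d m = 0) (hQ : HasSum q Q)
    (hX : HasSum (fun m => (q m)⁻¹ * d m ^ 2) X) : (∑' m, |d m|) ^ 2 ≤ Q * X := by
  have ratio_nonneg (m : ι) : 0 ≤ (q m)⁻¹ * d m ^ 2 := by have := hq m; positivity
  have hX0 : 0 ≤ X := hX.nonneg ratio_nonneg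
  have hQ0 : 0 ≤ Q := hQ.nonneg hq
  refine (Real.le_sqrt (tsum_nonneg fun m => abs_nonneg _) (by positivity)).1
    (Real.tsum_le_of_sum_le (fun m => abs_nonneg _) fun s => Real.le_sqrt_of_sq_le ?_)
  calc (∑ m ∈ s, |d m|) ^ 2
      ≤ (∑ m ∈ s, q m) * ∑ m ∈ s, (q m)⁻¹ * d m ^ 2 := by
        refine sum_sq_le_sum_mul_sum_of_sq_le_mul _ (fun m _ => hq m)
          (fun m _ => ratio_nonneg m) fun m _ => ?_
        rcases eq_or_ne (q m) 0 with hm | hm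
        · simp [hd m hm]
        · rw [sq_abs, mul_inv_cancel_left₀ hm]
    _ ≤ Q * X := by
        gcongr
        · exact sum_nonneg fun m _ => ratio_nonneg m
        · exact sum_le_hasSum _ (fun m _ => hq m) hQ
        · exact sum_le_hasSum _ (fun m _ => ratio_nonneg m) hX

theorem hasSum_pow_div_factorial (x : ℝ) : HasSum (fun k : ℕ => x ^ k / k !) (exp x) :=
  Real.exp_eq_exp_ℝ ▸ NormedSpace.expSeries_div_hasSum_exp x

theorem exp_sub_sum_range_le_inv_factorial {t : ℝ} (ht0 : 0 ≤ t) (ht1 : t ≤ 1) {L : ℕ}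
    (hL : 1 ≤ L) : exp t - ∑ j ∈ range (L + 1), t ^ j / j ! ≤ 1 / L ! := by
  have hL' : (1 : ℝ) ≤ L := by exact_mod_cast hL
  calc exp t - ∑ j ∈ range (L + 1), t ^ j / j !
      ≤ t ^ (L + 1) * ((L + 1 : ℕ) + 1) / ((L + 1)! * (L + 1 : ℕ)) :=
        sub_le_iff_le_add'.2 (Real.exp_bound' ht0 ht1 L.succ_pos)
    _ ≤ 1 * ((L + 1 : ℕ) + 1) / ((L + 1)! * (L + 1 : ℕ)) := by
        gcongr
        exact pow_le_one₀ ht0 ht1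
    _ ≤ 1 / L ! := by
        rw [div_le_div_iff₀ (by positivity) (by positivity), Nat.factorial_succ]
        push_cast
        have : (L : ℝ) + 2 ≤ (L + 1) ^ 2 := by nlinarith
        nlinarith [mul_le_mul_of_nonneg_left this (Nat.cast_nonneg (α := ℝ) L !)]

end InfiniteSums

section MeanDiscrepancy

variable {α : Type*} [MeasurableSpace α]

/-- The squared maximum mean discrepancy of the kernel `K` between `U` and `V`, that is, the
integral of `K` against the product of the signed measure `U - V` with itself when `K` is
symmetric. -/
noncomputable def mmdSq (K : α → α → ℝ) (U V : Measure α) : ℝ :=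
  ∫ z, K z.1 z.2 ∂(U.prod U) - 2 * ∫ z, K z.1 z.2 ∂(U.prod V) + ∫ z, K z.1 z.2 ∂(V.prod V)

variable {ι : Type*} [Countable ι] {K : α → α → ℝ} {w : ι → ℝ} {f : ι → α → ℝ} {U V : Measure α}
  [IsFiniteMeasure U] [IsFiniteMeasure V]

theorem hasSum_mul_integral_mul_integral (hw : ∀ m, 0 ≤ w m) (hf : ∀ m, StronglyMeasurable (f m))
    (hK : ∀ u v, HasSum (fun m => w m * (f m u * f m v)) (K u v))
    (hU : Integrable (fun u => K u u) U) (hV : Integrable (fun v => K v v) V) :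
    HasSum (fun m => w m * ((∫ u, f m u ∂U) * ∫ v, f m v ∂V))
      (∫ z, K z.1 z.2 ∂(U.prod V)) := by
  -- AM-GM dominates the expansion of `K` at `(u, v)` by those at `(u, u)` and `(v, v)`.
  have bound_hasSum (z : α × α) : HasSum
      (fun m => w m * (f m z.1 * f m z.1) + w m * (f m z.2 * f m z.2)) (K z.1 z.1 + K z.2 z.2) :=
    (hK z.1 z.1).add (hK z.2 z.2)
  have norm_le_bound (m : ι) (z : α × α) : ‖w m * (f m z.1 * f m z.2)‖ ≤
      w m * (f m z.1 * f m z.1) + w m * (f m z.2 * f m z.2) := by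
    rw [norm_mul, Real.norm_of_nonneg (hw m), Real.norm_eq_abs, ← mul_add]
    exact mul_le_mul_of_nonneg_left (abs_le.2
      ⟨by nlinarith [sq_nonneg (f m z.1 + f m z.2)], by nlinarith [sq_nonneg (f m z.1 - f m z.2)]⟩)
      (hw m)
  have := hasSum_integral_of_dominated_convergence (μ := U.prod V)
    (F := fun m z => w m * (f m z.1 * f m z.2)) _
    (fun m => (((hf m).comp_measurable measurable_fst).mul
      ((hf m).comp_measurable measurable_snd)).const_mul (w m) |>.aestronglyMeasurable)
    (fun m => ae_of_all _ (norm_le_bound m)) (ae_of_all _ fun z => (bound_hasSum z).summable)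
    (((hU.comp_fst V).add (hV.comp_snd U)).congr <|
      ae_of_all _ fun z => (bound_hasSum z).tsum_eq.symm)
    (ae_of_all _ fun z => hK z.1 z.2)
  simpa only [integral_const_mul, integral_prod_mul] using this

theorem hasSum_mul_sq_integral_sub (hw : ∀ m, 0 ≤ w m) (hf : ∀ m, StronglyMeasurable (f m))
    (hK : ∀ u v, HasSum (fun m => w m * (f m u * f m v)) (K u v))
    (hU : Integrable (fun u => K u u) U) (hV : Integrable (fun v => K v v) V) :
    HasSum (fun m => w m * (∫ u, f m u ∂U - ∫ v, f m v ∂V) ^ 2) (mmdSq K U V) := by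
  convert! ((hasSum_mul_integral_mul_integral hw hf hK hU hU).sub
    ((hasSum_mul_integral_mul_integral hw hf hK hU hV).mul_left 2)).add
    (hasSum_mul_integral_mul_integral hw hf hK hV hV) using 2
  ring

end MeanDiscrepancy

section ExponentialKernel

/-- The exponential kernel centred at `c`, with scale `κ`. -/
noncomputable def expKernel (κ c u v : ℝ) : ℝ := exp (κ * ((u - c) * (v - c)))

theorem hasSum_expKernel (κ c u v : ℝ) :
    HasSum (fun j : ℕ => κ ^ j / j ! * ((u - c) ^ j * (v - c) ^ j)) (expKernel κ c u v) := by
  convert! hasSum_pow_div_factorial (κ * ((u - c) * (v - c))) using 1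
  ext j
  rw [mul_pow, mul_pow]
  ring

variable {U V : Measure ℝ} {κ c r : ℝ}

theorem ae_abs_sub_le_of_Icc [IsProbabilityMeasure U] {Λ : ℝ}
    (hU : U (Set.Icc 0 Λ) = 1) : ∀ᵐ u ∂U, |u - Λ| ≤ Λ := by
  filter_upwards [(mem_ae_iff_prob_eq_one measurableSet_Icc).2 hU] with u hu
  exact abs_le.2 ⟨by linarith [hu.1], by linarith [hu.1, hu.2]⟩

theorem integrable_of_continuous_of_ae_abs_sub_le [IsFiniteMeasure U]
    (hU : ∀ᵐ u ∂U, |u - c| ≤ r) {f : ℝ → ℝ} (hf : Continuous f) : Integrable f U := by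
  rw [← Measure.restrict_eq_self_of_ae_mem (s := Metric.closedBall c r) hU]
  exact hf.continuousOn.integrableOn_compact (isCompact_closedBall c r)

theorem integral_eval_eq_of_integral_pow_eq {p : ℝ[X]}
    (hU : ∀ j ≤ p.natDegree, Integrable (fun u => u ^ j) U)
    (hV : ∀ j ≤ p.natDegree, Integrable (fun u => u ^ j) V)
    (h : ∀ j ≤ p.natDegree, ∫ u, u ^ j ∂U = ∫ v, v ^ j ∂V) :
    ∫ u, p.eval u ∂U = ∫ v, p.eval v ∂V := by
  simp only [eval_eq_sum_range]
  rw [integral_finsetSum _ fun j hj => (hU j (mem_range_succ_iff.1 hj)).const_mul _,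
    integral_finsetSum _ fun j hj => (hV j (mem_range_succ_iff.1 hj)).const_mul _]
  simp only [integral_const_mul]
  exact sum_congr rfl fun j hj => by rw [h j (mem_range_succ_iff.1 hj)]

theorem integral_sub_pow_eq_of_integral_pow_eq [IsProbabilityMeasure U] [IsProbabilityMeasure V]
    (hU : ∀ᵐ u ∂U, |u - c| ≤ r) (hV : ∀ᵐ v ∂V, |v - c| ≤ r) {L : ℕ}
    (hmom : ∀ j, 1 ≤ j → j ≤ L → ∫ u, u ^ j ∂U = ∫ v, v ^ j ∂V) {j : ℕ} (hj : j ≤ L) :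
    ∫ u, (u - c) ^ j ∂U = ∫ v, (v - c) ^ j ∂V := by
  have pow_integral_eq (i : ℕ) (hi : i ≤ L) : ∫ u, u ^ i ∂U = ∫ v, v ^ i ∂V := by
    rcases i.eq_zero_or_pos with rfl | hi0
    · simp
    · exact hmom i hi0 hi
  have natDegree_eq : ((X - C c) ^ j).natDegree = j := by simp
  simpa using integral_eval_eq_of_integral_pow_eq (p := (X - C c) ^ j)
    (fun i _ => integrable_of_continuous_of_ae_abs_sub_le hU (continuous_pow i))
    (fun i _ => integrable_of_continuous_of_ae_abs_sub_le hV (continuous_pow i))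
    fun i hi => pow_integral_eq i (hi.trans (natDegree_eq.trans_le hj))

theorem abs_integral_sub_pow_le [IsProbabilityMeasure U] (hU : ∀ᵐ u ∂U, |u - c| ≤ r) (j : ℕ) :
    |∫ u, (u - c) ^ j ∂U| ≤ r ^ j := by
  have norm_le : ∀ᵐ u ∂U, ‖(u - c) ^ j‖ ≤ r ^ j := by
    filter_upwards [hU] with u hu
    rw [norm_pow, Real.norm_eq_abs]
    gcongr
  simpa using norm_integral_le_of_norm_le_const norm_le

theorem sq_integral_sub_pow_sub_le [IsProbabilityMeasure U] [IsProbabilityMeasure V]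
    (hU : ∀ᵐ u ∂U, |u - c| ≤ r) (hV : ∀ᵐ v ∂V, |v - c| ≤ r) (j : ℕ) :
    (∫ u, (u - c) ^ j ∂U - ∫ v, (v - c) ^ j ∂V) ^ 2 ≤ 4 * (r ^ 2) ^ j := by
  have abs_sub_le : |∫ u, (u - c) ^ j ∂U - ∫ v, (v - c) ^ j ∂V| ≤ 2 * r ^ j :=
    (abs_sub _ _).trans <| by
      linarith [abs_integral_sub_pow_le hU j, abs_integral_sub_pow_le hV j]
  calc (∫ u, (u - c) ^ j ∂U - ∫ v, (v - c) ^ j ∂V) ^ 2 ≤ (2 * r ^ j) ^ 2 :=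
        sq_le_sq' (abs_le.1 abs_sub_le).1 (abs_le.1 abs_sub_le).2
    _ = 4 * (r ^ 2) ^ j := by ring

theorem mmdSq_expKernel_le [IsProbabilityMeasure U] [IsProbabilityMeasure V] (hκ : 0 ≤ κ)
    (hU : ∀ᵐ u ∂U, |u - c| ≤ r) (hV : ∀ᵐ v ∂V, |v - c| ≤ r) {n : ℕ}
    (hmom : ∀ j < n, ∫ u, (u - c) ^ j ∂U = ∫ v, (v - c) ^ j ∂V) :
    mmdSq (expKernel κ c) U V ≤
      4 * (exp (κ * r ^ 2) - ∑ j ∈ range n, (κ * r ^ 2) ^ j / j !) := by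
  have diag_continuous : Continuous fun u => expKernel κ c u u := by
    unfold expKernel
    fun_prop
  have mmd_hasSum := hasSum_mul_sq_integral_sub (fun j => by positivity)
    (fun j => (by fun_prop : Continuous fun u : ℝ => (u - c) ^ j).stronglyMeasurable)
    (hasSum_expKernel κ c) (integrable_of_continuous_of_ae_abs_sub_le hU diag_continuous)
    (integrable_of_continuous_of_ae_abs_sub_le hV diag_continuous)
  have head_eq_zero : ∑ j ∈ range n, κ ^ j / j ! *
      (∫ u, (u - c) ^ j ∂U - ∫ v, (v - c) ^ j ∂V) ^ 2 = 0 :=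
    sum_eq_zero fun j hj => by simp [hmom j (mem_range.1 hj)]
  have mmd_tail := (hasSum_nat_add_iff' n).2 mmd_hasSum
  rw [head_eq_zero, sub_zero] at mmd_tail
  have exp_tail := ((hasSum_nat_add_iff' n).2 (hasSum_pow_div_factorial (κ * r ^ 2))).mul_left 4
  refine hasSum_le (fun k => ?_) mmd_tail exp_tail
  calc κ ^ (k + n) / (k + n)! *
        (∫ u, (u - c) ^ (k + n) ∂U - ∫ v, (v - c) ^ (k + n) ∂V) ^ 2
      ≤ κ ^ (k + n) / (k + n)! * (4 * (r ^ 2) ^ (k + n)) := by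
        gcongr
        exact sq_integral_sub_pow_sub_le hU hV _
    _ = 4 * ((κ * r ^ 2) ^ (k + n) / (k + n)!) := by
        rw [mul_pow]
        ring

end ExponentialKernel

section Poisson

theorem poiP_nonneg {μ : ℝ} (hμ : 0 ≤ μ) (k : ℕ) : 0 ≤ poiP μ k := by
  unfold poiP
  positivity

theorem hasSum_poiP (μ : ℝ) : HasSum (poiP μ) 1 := by
  convert! (hasSum_pow_div_factorial μ).mul_left (exp (-μ)) using 1
  · ext k
    rw [poiP, mul_div_assoc]
  · rw [← Real.exp_add, neg_add_cancel, Real.exp_zero]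

theorem poiP_eq_zero_iff {μ : ℝ} {k : ℕ} : poiP μ k = 0 ↔ μ = 0 ∧ k ≠ 0 := by
  simp [poiP, Nat.factorial_ne_zero]

theorem hasSum_inv_poiP_mul_poiP_mul_poiP {a a' b : ℝ} (ha : b = 0 → a = 0)
    (ha' : b = 0 → a' = 0) :
    HasSum (fun k => (poiP b k)⁻¹ * (poiP a k * poiP a' k)) (exp ((a - b) * (a' - b) / b)) := by
  rcases eq_or_ne b 0 with rfl | hb
  · simpa [ha rfl, ha' rfl, ← div_eq_inv_mul] using hasSum_poiP 0
  convert! (hasSum_pow_div_factorial (a * a' / b)).mul_left (exp (b - a - a')) using 1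
  · ext k
    have exp_eq : exp (b - a - a') = (exp (-b))⁻¹ * (exp (-a) * exp (-a')) := by
      rw [← Real.exp_neg, ← Real.exp_add, ← Real.exp_add]
      ring_nf
    rw [exp_eq, poiP, poiP, poiP, div_pow, mul_pow]
    field_simp
  · rw [← Real.exp_add]
    congr 1
    field_simp
    ring

variable {ι : Type*} [Fintype ι]

/-- The pmf of the product Poisson distribution `Poi⃗(μ)`. -/
noncomputable def poiVec (μ : ι → ℝ) (m : ι → ℕ) : ℝ := ∏ i, poiP (μ i) (m i)

theorem poiVec_nonneg {μ : ι → ℝ} (hμ : ∀ i, 0 ≤ μ i) (m : ι → ℕ) : 0 ≤ poiVec μ m :=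
  prod_nonneg fun i _ => poiP_nonneg (hμ i) (m i)

theorem hasSum_poiVec (μ : ι → ℝ) : HasSum (poiVec μ) 1 := by
  rw [← prod_const_one (s := (univ : Finset ι))]
  exact hasSum_prod_apply (fun i => (hasSum_poiP (μ i)).summable.norm) fun i => hasSum_poiP (μ i)

theorem poiVec_eq_zero_of_poiVec_eq_zero {a b : ι → ℝ} (ha : ∀ i, b i = 0 → a i = 0) {m : ι → ℕ}
    (hm : poiVec b m = 0) : poiVec a m = 0 := by
  obtain ⟨i, hi, hbi⟩ := prod_eq_zero_iff.1 hm
  obtain ⟨hb0, hmi⟩ := poiP_eq_zero_iff.1 hbi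
  exact prod_eq_zero hi (poiP_eq_zero_iff.2 ⟨ha i hb0, hmi⟩)

theorem hasSum_inv_poiVec_mul_poiVec_mul_poiVec {a a' b : ι → ℝ} (ha : ∀ i, b i = 0 → a i = 0)
    (ha' : ∀ i, b i = 0 → a' i = 0) :
    HasSum (fun m => (poiVec b m)⁻¹ * (poiVec a m * poiVec a' m))
      (exp (∑ i, (a i - b i) * (a' i - b i) / b i)) := by
  have coord (i : ι) := hasSum_inv_poiP_mul_poiP_mul_poiP (ha i) (ha' i)
  simpa only [poiVec, Real.exp_sum, prod_mul_distrib, prod_inv_distrib] using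
    hasSum_prod_apply (fun i => (coord i).summable.norm) coord

end Poisson

section AffinePoisson

theorem mul_add_eq_zero_of_imp {c x y : ℝ} (hx : c * x + y = 0 → x = 0) (u : ℝ)
    (h : c * x + y = 0) : u * x + y = 0 := by
  simpa [hx h] using h

theorem sq_div_le_div_of_mul_le {x a b : ℝ} (hx : 0 ≤ x) (ha : 0 < a) (h : a * x ≤ b) :
    x ^ 2 / b ≤ x / a := by
  rcases hx.eq_or_lt with rfl | hx
  · simp
  calc x ^ 2 / b ≤ x ^ 2 / (a * x) := by gcongr
    _ = x / a := by field_simp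

variable {ι : Type*} [Fintype ι] {θ lam : ι → ℝ} {c : ℝ}

/-- The Fisher information at `u = c` of the family `u ↦ Poi⃗(u·θ + λ)`. Coordinates of mean `0`
contribute `0`, as division by zero gives `0`. -/
noncomputable def poiFisher (θ lam : ι → ℝ) (c : ℝ) : ℝ := ∑ i, θ i ^ 2 / (c * θ i + lam i)

theorem poiFisher_nonneg (hc : ∀ i, 0 ≤ c * θ i + lam i) : 0 ≤ poiFisher θ lam c :=
  sum_nonneg fun i _ => div_nonneg (sq_nonneg _) (hc i)

theorem hasSum_inv_poiVec_mul_affine (hθ : ∀ i, c * θ i + lam i = 0 → θ i = 0) (u v : ℝ) :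
    HasSum (fun m => (poiVec (fun i => c * θ i + lam i) m)⁻¹ *
        (poiVec (fun i => u * θ i + lam i) m * poiVec (fun i => v * θ i + lam i) m))
      (expKernel (poiFisher θ lam c) c u v) := by
  convert! hasSum_inv_poiVec_mul_poiVec_mul_poiVec
    (fun i => mul_add_eq_zero_of_imp (hθ i) u) (fun i => mul_add_eq_zero_of_imp (hθ i) v) using 1
  rw [expKernel, poiFisher, sum_mul]
  congr 1
  exact sum_congr rfl fun i _ => by ring

theorem sq_tsum_abs_poiMix_sub_le_mmdSq {D : ℕ} {θ lam : Fin D → ℝ} {r : ℝ} {U V : Measure ℝ}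
    [IsFiniteMeasure U] [IsFiniteMeasure V] (hc : ∀ i, 0 ≤ c * θ i + lam i)
    (hθ : ∀ i, c * θ i + lam i = 0 → θ i = 0) (hU : ∀ᵐ u ∂U, |u - c| ≤ r)
    (hV : ∀ᵐ v ∂V, |v - c| ≤ r) :
    (∑' m, |poiMix U θ lam m - poiMix V θ lam m|) ^ 2 ≤
      mmdSq (expKernel (poiFisher θ lam c) c) U V := by
  have pmf_continuous (m : Fin D → ℕ) :
      Continuous fun u => poiVec (fun i => u * θ i + lam i) m := by
    unfold poiVec poiP
    fun_prop
  have diag_continuous : Continuous fun u => expKernel (poiFisher θ lam c) c u u := by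
    unfold expKernel
    fun_prop
  have chiSq_hasSum := hasSum_mul_sq_integral_sub
    (fun m => inv_nonneg.2 (poiVec_nonneg hc m)) (fun m => (pmf_continuous m).stronglyMeasurable)
    (hasSum_inv_poiVec_mul_affine hθ) (integrable_of_continuous_of_ae_abs_sub_le hU diag_continuous)
    (integrable_of_continuous_of_ae_abs_sub_le hV diag_continuous)
  have poiMix_eq_zero (W : Measure ℝ) (m : Fin D → ℕ)
      (hm : poiVec (fun i => c * θ i + lam i) m = 0) : poiMix W θ lam m = 0 :=
    integral_eq_zero_of_ae <| ae_of_all _ fun u =>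
      poiVec_eq_zero_of_poiVec_eq_zero (fun i => mul_add_eq_zero_of_imp (hθ i) u) hm
  rw [← one_mul (mmdSq _ _ _)]
  exact sq_tsum_abs_le_of_hasSum (poiVec_nonneg hc)
    (fun m hm => by rw [poiMix_eq_zero U m hm, poiMix_eq_zero V m hm, sub_self])
    (hasSum_poiVec _) chiSq_hasSum

theorem poiFisher_mul_sq_le_one {Λ : ℝ} (hΛ : 0 < Λ) (hθ : ∀ i, 0 ≤ θ i) (hlam : ∀ i, 0 ≤ lam i)
    (hθ1 : ∑ i, θ i ≤ 1)
    (hcond : 1 - 1 / (2 * Λ) ≤ ∑ i with 2 * Λ ^ 2 * θ i ≤ lam i, θ i) :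
    poiFisher θ lam Λ * Λ ^ 2 ≤ 1 := by
  have total := sum_filter_add_sum_filter_not univ (fun i => 2 * Λ ^ 2 * θ i ≤ lam i) θ
  set heavy := ∑ i with 2 * Λ ^ 2 * θ i ≤ lam i, θ i
  set light := ∑ i with ¬2 * Λ ^ 2 * θ i ≤ lam i, θ i
  have light_nonneg : 0 ≤ light := sum_nonneg fun i _ => hθ i
  have fisher_le : poiFisher θ lam Λ ≤ heavy / (2 * Λ ^ 2) + light / Λ := by
    rw [poiFisher, ← sum_filter_add_sum_filter_not univ (fun i => 2 * Λ ^ 2 * θ i ≤ lam i),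
      sum_div, sum_div]
    refine add_le_add (sum_le_sum fun i hi => ?_) (sum_le_sum fun i _ => ?_)
    · exact sq_div_le_div_of_mul_le (hθ i) (by positivity)
        ((mem_filter.1 hi).2.trans (le_add_of_nonneg_left (mul_nonneg hΛ.le (hθ i))))
    · exact sq_div_le_div_of_mul_le (hθ i) hΛ (le_add_of_nonneg_right (hlam i))
  calc poiFisher θ lam Λ * Λ ^ 2
      ≤ (heavy / (2 * Λ ^ 2) + light / Λ) * Λ ^ 2 := by gcongr
    _ ≤ (1 / (2 * Λ ^ 2) + 1 / (2 * Λ) / Λ) * Λ ^ 2 := by gcongr <;> linarith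
    _ = 1 := by
        field_simp
        norm_num

end AffinePoisson

theorem stmt_4_general (L : ℕ) (hL : 1 ≤ L) (Λ : ℝ) (hΛ : 0 < Λ)
    (U V : Measure ℝ) [IsProbabilityMeasure U] [IsProbabilityMeasure V]
    (hUsupp : U (Set.Icc 0 Λ) = 1) (hVsupp : V (Set.Icc 0 Λ) = 1)
    (hmom : ∀ j : ℕ, 1 ≤ j → j ≤ L → ∫ u, u ^ j ∂U = ∫ v, v ^ j ∂V)
    (D : ℕ) (θ lam : Fin D → ℝ) (hθ : ∀ i, 0 ≤ θ i) (hlam : ∀ i, 0 ≤ lam i)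
    (hfisher : poiFisher θ lam Λ * Λ ^ 2 ≤ 1) :
    ((1 / 2) * ∑' m : Fin D → ℕ, |poiMix U θ lam m - poiMix V θ lam m|) ^ 2
      ≤ 1 / (Nat.factorial L : ℝ) := by
  have hU := ae_abs_sub_le_of_Icc hUsupp
  have hV := ae_abs_sub_le_of_Icc hVsupp
  have mean_nonneg (i : Fin D) : 0 ≤ Λ * θ i + lam i :=
    add_nonneg (mul_nonneg hΛ.le (hθ i)) (hlam i)
  have θ_eq_zero (i : Fin D) (hi : Λ * θ i + lam i = 0) : θ i = 0 := by
    have := (add_eq_zero_iff_of_nonneg (mul_nonneg hΛ.le (hθ i)) (hlam i)).1 hi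
    exact (mul_eq_zero.1 this.1).resolve_left hΛ.ne'
  have fisher_nonneg := poiFisher_nonneg mean_nonneg
  calc ((1 / 2) * ∑' m, |poiMix U θ lam m - poiMix V θ lam m|) ^ 2
      = (∑' m, |poiMix U θ lam m - poiMix V θ lam m|) ^ 2 / 4 := by ring
    _ ≤ mmdSq (expKernel (poiFisher θ lam Λ) Λ) U V / 4 := by
        gcongr
        exact sq_tsum_abs_poiMix_sub_le_mmdSq mean_nonneg θ_eq_zero hU hV
    _ ≤ 4 * (exp (poiFisher θ lam Λ * Λ ^ 2) -
          ∑ j ∈ range (L + 1), (poiFisher θ lam Λ * Λ ^ 2) ^ j / j !) / 4 := by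
        gcongr
        exact mmdSq_expKernel_le fisher_nonneg hU hV fun j hj =>
          integral_sub_pow_eq_of_integral_pow_eq hU hV hmom (Nat.lt_succ_iff.1 hj)
    _ = exp (poiFisher θ lam Λ * Λ ^ 2) -
          ∑ j ∈ range (L + 1), (poiFisher θ lam Λ * Λ ^ 2) ^ j / j ! :=
        mul_div_cancel_left₀ _ four_ne_zero
    _ ≤ 1 / L ! := exp_sub_sum_range_le_inv_factorial (by positivity) hfisher hL

/-- moment matching bound for `CountDistinct` hard instances. -/
theorem stmt_4 (L : ℕ) (hL : 1 ≤ L) (Λ : ℝ) (hΛ : 0 < Λ)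
    (U V : Measure ℝ) [IsProbabilityMeasure U] [IsProbabilityMeasure V]
    (hUsupp : U (Set.Icc 0 Λ) = 1) (hVsupp : V (Set.Icc 0 Λ) = 1)
    (hmom : ∀ j : ℕ, 1 ≤ j → j ≤ L → ∫ u, u ^ j ∂U = ∫ v, v ^ j ∂V)
    (D : ℕ) (θ lam : Fin D → ℝ) (hθ : ∀ i, 0 ≤ θ i) (hlam : ∀ i, 0 ≤ lam i)
    (hθ1 : ∑ i, θ i = 1)
    (hcond : 1 - 1 / (2 * Λ) ≤
      ∑ i ∈ Finset.univ.filter (fun i => 2 * Λ ^ 2 * θ i ≤ lam i), θ i) :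
    ((1 / 2) * ∑' m : Fin D → ℕ, |poiMix U θ lam m - poiMix V θ lam m|) ^ 2
      ≤ 1 / (Nat.factorial L : ℝ) :=
  stmt_4_general L hL Λ hΛ U V hUsupp hVsupp hmom D θ lam hθ hlam
    (poiFisher_mul_sq_le_one hΛ hθ hlam hθ1.le hcond)
end

section
/- There is a constant C > 0 such that for every integer n ≥ 1 there exist a randomizer R mapping each x ∈ [n] to a probability distribution R(x) on the subsets of [n], and an analyzer A : (subsets of [n])^n → ℝ, with the following two properties. (Privacy) For all x, y ∈ [n] and every collection E of subsets of [n], R(x)(E) ≤ C·n·R(y)(E). (Accuracy) For every dataset (x₁,…,xₙ) ∈ [n]^n, if S₁,…,Sₙ are independent with S_i ← R(x_i), then with probability at least 0.99, |A(S₁,…,Sₙ) − |{x₁,…,xₙ}|| ≤ C·√n. (This says there is a (ln n + O(1))-locally differentially private protocol computing the number of distinct elements among n users with error O(√n).) -/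
/-!
Each user reports a random set that contains her own element with probability `1/2` and every other
element independently with probability `q = 1/(4n)`. Changing the input only changes two of these
coin flips, which costs a factor of at most `1/q = 4n` in the probability of any report.

For an element `j`, consider the parity of the number of reports that contain `j`. One fair coin
makes it uniform, so the sign `±1` of this parity has mean `0` if somebody holds `j`, and mean
`K = (1 - 2q) ^ n ≥ 1/2` if nobody does. Hence `n - (∑ j, sign j) / K` is an unbiased estimator of
the number of distinct elements. The `n` signs are independent, so its variance is at most
`n / K² ≤ 4n`, and Chebyshev's inequality gives an error `O(√n)`.
-/

open Finset Function

section WeightedSums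

variable {Ω β : Type*} [Fintype Ω]

lemma one_sub_div_sq_le_sum_ite_abs_le {w f : Ω → ℝ} {v t : ℝ} (w_nonneg : ∀ ω, 0 ≤ w ω)
    (sum_w : ∑ ω, w ω = 1) (moment_le : ∑ ω, w ω * f ω ^ 2 ≤ v) (t_pos : 0 < t) :
    1 - v / t ^ 2 ≤ ∑ ω, if |f ω| ≤ t then w ω else 0 := by
  have pointwise (ω : Ω) : w ω - w ω * f ω ^ 2 / t ^ 2 ≤ if |f ω| ≤ t then w ω else 0 := by
    split_ifs with small
    · have : 0 ≤ w ω * f ω ^ 2 / t ^ 2 := by have := w_nonneg ω; positivity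
      linarith
    · have : t ^ 2 ≤ f ω ^ 2 := by
        rw [← sq_abs (f ω)]
        gcongr
        exact (not_le.1 small).le
      rw [sub_nonpos, le_div_iff₀ (by positivity)]
      exact mul_le_mul_of_nonneg_left this (w_nonneg ω)
  calc 1 - v / t ^ 2 ≤ 1 - (∑ ω, w ω * f ω ^ 2) / t ^ 2 := by gcongr
    _ = ∑ ω, (w ω - w ω * f ω ^ 2 / t ^ 2) := by rw [sum_sub_distrib, sum_w, sum_div]
    _ ≤ _ := sum_le_sum fun ω _ => pointwise ω

lemma sum_mul_sq_sum_of_orthogonal [Fintype β] {w : Ω → ℝ} {f : β → Ω → ℝ}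
    (orthogonal : Pairwise fun j k => ∑ ω, w ω * (f j ω * f k ω) = 0) :
    ∑ ω, w ω * (∑ j, f j ω) ^ 2 = ∑ j, ∑ ω, w ω * f j ω ^ 2 := by
  calc ∑ ω, w ω * (∑ j, f j ω) ^ 2 = ∑ j, ∑ k, ∑ ω, w ω * (f j ω * f k ω) := by
        simp_rw [sq, sum_mul_sum, mul_sum]
        rw [sum_comm]
        exact sum_congr rfl fun j _ => sum_comm
    _ = ∑ j, ∑ ω, w ω * (f j ω * f j ω) :=
        sum_congr rfl fun j _ => Fintype.sum_eq_single j fun k hk => orthogonal hk.symm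
    _ = _ := by simp_rw [sq]

end WeightedSums

section RandomSubset

variable {α : Type*} [Fintype α] [DecidableEq α]

/-- The probability of `s` under the law of a random subset that contains each `j` independently
with probability `p j`. -/
noncomputable def subsetWeight (p : α → ℝ) (s : Finset α) : ℝ :=
  ∏ j, if j ∈ s then p j else 1 - p j

/-- The sign `-1` if `j ∈ s` and `1` otherwise, a character of the group of subsets under symmetric
difference. -/
def membershipSign (j : α) (s : Finset α) : ℝ := if j ∈ s then -1 else 1

lemma sum_prod_ite_mem (f g : α → ℝ) :
    ∑ s : Finset α, ∏ j, (if j ∈ s then f j else g j) = ∏ j, (f j + g j) := by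
  rw [Fintype.prod_add]
  refine sum_congr rfl fun s _ => ?_
  rw [prod_ite, filter_univ_mem, filter_not, filter_univ_mem, compl_eq_univ_sdiff]

lemma subsetWeight_nonneg {p : α → ℝ} (hp : ∀ j, p j ∈ Set.Icc 0 1) (s : Finset α) :
    0 ≤ subsetWeight p s := by
  refine prod_nonneg fun j _ => ?_
  split_ifs
  · exact (hp j).1
  · exact sub_nonneg.2 (hp j).2

lemma sum_subsetWeight_mul_prod_membershipSign (p : α → ℝ) (T : Finset α) :
    ∑ s, subsetWeight p s * ∏ j ∈ T, membershipSign j s = ∏ j ∈ T, (1 - 2 * p j) := by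
  have as_prod (s : Finset α) : subsetWeight p s * ∏ j ∈ T, membershipSign j s =
      ∏ j, if j ∈ s then (if j ∈ T then -p j else p j) else 1 - p j := by
    rw [subsetWeight, ← Fintype.prod_ite_mem T, ← prod_mul_distrib]
    refine prod_congr rfl fun j _ => ?_
    unfold membershipSign
    split_ifs <;> ring
  simp_rw [as_prod, sum_prod_ite_mem]
  rw [← Fintype.prod_ite_mem T]
  refine prod_congr rfl fun j _ => ?_
  split_ifs <;> ring

lemma sum_subsetWeight (p : α → ℝ) : ∑ s, subsetWeight p s = 1 := by
  simpa using sum_subsetWeight_mul_prod_membershipSign p ∅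

lemma subsetWeight_update_mul (p : α → ℝ) (x : α) (a : ℝ) (s : Finset α) :
    subsetWeight (update p x a) s * (if x ∈ s then p x else 1 - p x) =
      subsetWeight p s * (if x ∈ s then a else 1 - a) := by
  have away : ∏ j ∈ univ.erase x, (if j ∈ s then update p x a j else 1 - update p x a j) =
      ∏ j ∈ univ.erase x, (if j ∈ s then p j else 1 - p j) :=
    prod_congr rfl fun j hj => by rw [update_of_ne (ne_of_mem_erase hj)]
  unfold subsetWeight
  rw [← mul_prod_erase univ _ (mem_univ x), away, update_self,
    ← mul_prod_erase univ (fun j => if j ∈ s then p j else 1 - p j) (mem_univ x)]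
  ring

end RandomSubset

section UnaryEncoding

variable {α : Type*} [DecidableEq α]

/-- The inclusion probabilities of asymmetric unary encoding on input `x`: the element `x` is
reported with probability `1/2`, every other element with probability `q`. -/
noncomputable def unaryInclusion (q : ℝ) (x : α) : α → ℝ := update (fun _ => q) x (1 / 2)

lemma unaryInclusion_mem_Icc {q : ℝ} (hq : q ∈ Set.Icc 0 1) (x j : α) :
    unaryInclusion q x j ∈ Set.Icc (0 : ℝ) 1 := by
  rw [unaryInclusion, update_apply]
  split_ifs
  · norm_num
  · exact hq

variable [Fintype α]

/-- The asymmetric unary encoding randomizer: the probability that input `x` is reported as the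
set `s`. -/
noncomputable def unaryEncoding (q : ℝ) (x : α) : Finset α → ℝ :=
  subsetWeight (unaryInclusion q x)

lemma unaryEncoding_nonneg {q : ℝ} (hq : q ∈ Set.Icc 0 1) (x : α) (s : Finset α) :
    0 ≤ unaryEncoding q x s :=
  subsetWeight_nonneg (unaryInclusion_mem_Icc hq x) s

/-- The right-hand side does not depend on `x`: this is where privacy comes from. -/
lemma unaryEncoding_mul (q : ℝ) (x : α) (s : Finset α) :
    unaryEncoding q x s * (if x ∈ s then q else 1 - q) = subsetWeight (fun _ => q) s / 2 := by
  have fair : (if x ∈ s then (1 / 2 : ℝ) else 1 - 1 / 2) = 1 / 2 := by split_ifs <;> norm_num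
  have := subsetWeight_update_mul (fun _ => q) x (1 / 2) s
  rwa [fair, mul_one_div] at this

lemma unaryEncoding_le_inv_mul {q : ℝ} (q_pos : 0 < q) (q_le : q ≤ 1 / 2) (x y : α)
    (s : Finset α) : unaryEncoding q x s ≤ q⁻¹ * unaryEncoding q y s := by
  have nonneg (z : α) : 0 ≤ unaryEncoding q z s :=
    unaryEncoding_nonneg ⟨q_pos.le, by linarith⟩ z s
  have q_le_factor : q ≤ if x ∈ s then q else 1 - q := by split_ifs <;> linarith
  have factor_le_one : (if y ∈ s then q else 1 - q) ≤ 1 := by split_ifs <;> linarith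
  rw [le_inv_mul_iff₀ q_pos, mul_comm]
  calc unaryEncoding q x s * q
      ≤ unaryEncoding q x s * (if x ∈ s then q else 1 - q) :=
        mul_le_mul_of_nonneg_left q_le_factor (nonneg x)
    _ = unaryEncoding q y s * (if y ∈ s then q else 1 - q) := by simp only [unaryEncoding_mul]
    _ ≤ unaryEncoding q y s := mul_le_of_le_one_right (nonneg y) factor_le_one

lemma sum_unaryEncoding_le_inv_mul {q : ℝ} (q_pos : 0 < q) (q_le : q ≤ 1 / 2) (x y : α)
    (E : Finset (Finset α)) :
    ∑ s ∈ E, unaryEncoding q x s ≤ q⁻¹ * ∑ s ∈ E, unaryEncoding q y s := by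
  rw [mul_sum]
  exact sum_le_sum fun s _ => unaryEncoding_le_inv_mul q_pos q_le x y s

end UnaryEncoding

section Parity

variable {ι α : Type*} [Fintype ι] [DecidableEq α]

/-- The sign `(-1) ^ #{i | j ∈ S i}`. -/
def paritySign (j : α) (S : ι → Finset α) : ℝ := ∏ i, membershipSign j (S i)

/-- The mean of `paritySign j` under `jointWeight p`. -/
def parityMean (p : ι → α → ℝ) (j : α) : ℝ := ∏ i, (1 - 2 * p i j)

lemma paritySign_sq (j : α) (S : ι → Finset α) : paritySign j S ^ 2 = 1 := by
  rw [paritySign, ← prod_pow]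
  refine prod_eq_one fun i _ => ?_
  unfold membershipSign
  split_ifs <;> norm_num

variable [Fintype α]

/-- The probability of the reports `S` when user `i` independently sends a random subset with
inclusion probabilities `p i`. -/
noncomputable def jointWeight (p : ι → α → ℝ) (S : ι → Finset α) : ℝ :=
  ∏ i, subsetWeight (p i) (S i)

lemma jointWeight_nonneg {p : ι → α → ℝ} (hp : ∀ i j, p i j ∈ Set.Icc 0 1) (S : ι → Finset α) :
    0 ≤ jointWeight p S :=
  prod_nonneg fun i _ => subsetWeight_nonneg (hp i) (S i)

variable [DecidableEq ι]

lemma sum_jointWeight_mul_prod_paritySign (p : ι → α → ℝ) (T : Finset α) :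
    ∑ S, jointWeight p S * ∏ j ∈ T, paritySign j S = ∏ j ∈ T, parityMean p j := by
  simp_rw [jointWeight, paritySign, parityMean]
  rw [prod_comm]
  simp_rw [← sum_subsetWeight_mul_prod_membershipSign, Fintype.prod_sum, prod_mul_distrib]
  exact sum_congr rfl fun S _ => by rw [prod_comm]

lemma sum_jointWeight (p : ι → α → ℝ) : ∑ S, jointWeight p S = 1 := by
  simpa using sum_jointWeight_mul_prod_paritySign p ∅

lemma sum_jointWeight_mul_paritySign (p : ι → α → ℝ) (j : α) :
    ∑ S, jointWeight p S * paritySign j S = parityMean p j := by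
  simpa using sum_jointWeight_mul_prod_paritySign p {j}

lemma paritySign_covariance (p : ι → α → ℝ) (j k : α) :
    ∑ S, jointWeight p S * ((paritySign j S - parityMean p j) * (paritySign k S - parityMean p k)) =
      ∑ S, jointWeight p S * (paritySign j S * paritySign k S) -
        parityMean p j * parityMean p k := by
  have expand (S : ι → Finset α) :
      jointWeight p S * ((paritySign j S - parityMean p j) * (paritySign k S - parityMean p k)) =
        jointWeight p S * (paritySign j S * paritySign k S)
          - jointWeight p S * paritySign j S * parityMean p k
          - jointWeight p S * paritySign k S * parityMean p j
          + jointWeight p S * (parityMean p j * parityMean p k) := by ring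
  simp_rw [expand, sum_add_distrib, sum_sub_distrib, ← sum_mul, sum_jointWeight_mul_paritySign,
    sum_jointWeight]
  ring

lemma paritySign_covariance_of_ne (p : ι → α → ℝ) {j k : α} (hjk : j ≠ k) :
    ∑ S, jointWeight p S *
      ((paritySign j S - parityMean p j) * (paritySign k S - parityMean p k)) = 0 := by
  have := sum_jointWeight_mul_prod_paritySign p {j, k}
  simp only [prod_pair hjk] at this
  rw [paritySign_covariance, this, sub_self]

lemma paritySign_variance (p : ι → α → ℝ) (j : α) :
    ∑ S, jointWeight p S * (paritySign j S - parityMean p j) ^ 2 = 1 - parityMean p j ^ 2 := by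
  simp_rw [sq (paritySign j _ - _), paritySign_covariance, ← sq, paritySign_sq, mul_one,
    sum_jointWeight]

lemma sum_paritySign_variance_le_card (p : ι → α → ℝ) :
    ∑ S, jointWeight p S * (∑ j, paritySign j S - ∑ j, parityMean p j) ^ 2 ≤ Fintype.card α := by
  simp_rw [← sum_sub_distrib]
  rw [sum_mul_sq_sum_of_orthogonal fun j k hjk => paritySign_covariance_of_ne p hjk]
  calc ∑ j, ∑ S, jointWeight p S * (paritySign j S - parityMean p j) ^ 2
      ≤ ∑ _j : α, (1 : ℝ) := by
        refine sum_le_sum fun j _ => ?_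
        rw [paritySign_variance]
        exact sub_le_self 1 (sq_nonneg _)
    _ = Fintype.card α := by simp

end Parity

section DistinctElements

variable {ι α : Type*} [Fintype ι] [DecidableEq α]

lemma parityMean_unaryInclusion (q : ℝ) (x : ι → α) (j : α) :
    parityMean (fun i => unaryInclusion q (x i)) j =
      if j ∈ univ.image x then 0 else (1 - 2 * q) ^ Fintype.card ι := by
  unfold parityMean unaryInclusion
  split_ifs with held
  · obtain ⟨i, -, rfl⟩ := mem_image.1 held
    exact prod_eq_zero (mem_univ i) (by simp)
  · have ne (i : ι) : j ≠ x i := fun h => held (h ▸ mem_image_of_mem x (mem_univ i))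
    simp [ne]

variable [Fintype α]

lemma sum_parityMean_unaryInclusion (q : ℝ) (x : ι → α) :
    ∑ j, parityMean (fun i => unaryInclusion q (x i)) j =
      (Fintype.card α - #(univ.image x)) * (1 - 2 * q) ^ Fintype.card ι := by
  simp_rw [parityMean_unaryInclusion, ← ite_not (_ ∈ _), ← sum_filter, sum_const, nsmul_eq_mul,
    ← compl_filter, filter_univ_mem, card_compl, Nat.cast_sub (card_le_univ _)]

/-- The analyzer: an estimate of the number of distinct inputs from reports `S` produced by
`unaryEncoding q`, obtained by solving `sum_parityMean_unaryInclusion` for that number. -/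
noncomputable def distinctEstimate (q : ℝ) (S : ι → Finset α) : ℝ :=
  Fintype.card α - (∑ j, paritySign j S) / (1 - 2 * q) ^ Fintype.card ι

variable [DecidableEq ι]

lemma distinctEstimate_sq_error_le {q : ℝ} (hq : q ≠ 1 / 2) (x : ι → α) :
    ∑ S, jointWeight (fun i => unaryInclusion q (x i)) S *
        (distinctEstimate q S - #(univ.image x)) ^ 2 ≤
      Fintype.card α / ((1 - 2 * q) ^ Fintype.card ι) ^ 2 := by
  set p : ι → α → ℝ := fun i => unaryInclusion q (x i)
  set K := (1 - 2 * q) ^ Fintype.card ι with K_def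
  have K_ne : K ≠ 0 := pow_ne_zero _ fun h => hq (by linarith)
  have error_eq (S : ι → Finset α) : (distinctEstimate q S - #(univ.image x)) ^ 2 =
      (∑ j, paritySign j S - ∑ j, parityMean p j) ^ 2 / K ^ 2 := by
    rw [sum_parityMean_unaryInclusion, distinctEstimate, ← K_def]
    field_simp
    ring
  simp_rw [error_eq, ← mul_div_assoc, ← sum_div]
  gcongr
  exact sum_paritySign_variance_le_card p

theorem distinctEstimate_accuracy {q t : ℝ} (hq : q ∈ Set.Ico 0 (1 / 2)) (ht : 0 < t)
    (x : ι → α) :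
    1 - Fintype.card α / ((1 - 2 * q) ^ Fintype.card ι) ^ 2 / t ^ 2 ≤
      ∑ S : ι → Finset α, if |distinctEstimate q S - #(univ.image x)| ≤ t then
        ∏ i, unaryEncoding q (x i) (S i) else 0 :=
  one_sub_div_sq_le_sum_ite_abs_le
    (jointWeight_nonneg fun i => unaryInclusion_mem_Icc ⟨hq.1, by linarith [hq.2]⟩ (x i))
    (sum_jointWeight _) (distinctEstimate_sq_error_le hq.2.ne x) ht

end DistinctElements

lemma half_le_one_sub_inv_pow {n : ℕ} (hn : 1 ≤ n) :
    (1 / 2 : ℝ) ≤ (1 - 2 * (4 * n : ℝ)⁻¹) ^ n := by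
  have hn' : (1 : ℝ) ≤ n := by exact_mod_cast hn
  have small : (4 * n : ℝ)⁻¹ ≤ 1 := inv_le_one_of_one_le₀ (by linarith)
  calc (1 / 2 : ℝ) = 1 + n * (-(2 * (4 * n : ℝ)⁻¹)) := by field_simp; norm_num
    _ ≤ (1 + -(2 * (4 * n : ℝ)⁻¹)) ^ n := one_add_mul_le_pow (by linarith) n
    _ = _ := by rw [← sub_eq_add_neg]

/-- a `(ln n + O(1))`-locally DP protocol computing the number of
distinct elements among `n` users with error `O(√n)`. -/
theorem stmt_5 :
    ∃ C : ℝ, 0 < C ∧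
      ∀ n : ℕ, 1 ≤ n →
        ∃ (R : Fin n → Finset (Fin n) → ℝ) (A : (Fin n → Finset (Fin n)) → ℝ),
          (∀ x, (∀ s, 0 ≤ R x s) ∧ ∑ s, R x s = 1) ∧
          (∀ x y : Fin n, ∀ E : Finset (Finset (Fin n)),
            ∑ s ∈ E, R x s ≤ C * (n : ℝ) * ∑ s ∈ E, R y s) ∧
          (∀ x : Fin n → Fin n,
            (0.99 : ℝ) ≤ ∑ S : Fin n → Finset (Fin n),
              (if |A S - ((Finset.univ.image x).card : ℝ)| ≤ C * Real.sqrt n then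
                ∏ i, R (x i) (S i) else 0)) := by
  refine ⟨20, by norm_num, fun n hn => ?_⟩
  have hn' : (1 : ℝ) ≤ n := by exact_mod_cast hn
  have K_ge := half_le_one_sub_inv_pow hn
  set q : ℝ := (4 * n : ℝ)⁻¹ with q_def
  have q_pos : 0 < q := by positivity
  have q_le : q ≤ 1 / 4 := by rw [q_def, one_div]; gcongr; linarith
  have nonneg : ∀ x s, 0 ≤ unaryEncoding q (x : Fin n) s :=
    unaryEncoding_nonneg ⟨q_pos.le, by linarith⟩
  refine ⟨unaryEncoding q, distinctEstimate q,
    fun x => ⟨nonneg x, sum_subsetWeight _⟩, fun x y E => ?_, fun x => ?_⟩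
  · have inv_q_le : q⁻¹ ≤ 20 * n := by rw [q_def, inv_inv]; linarith
    exact (sum_unaryEncoding_le_inv_mul q_pos (by linarith) x y E).trans
      (mul_le_mul_of_nonneg_right inv_q_le (sum_nonneg fun s _ => nonneg y s))
  · have accuracy :=
      distinctEstimate_accuracy ⟨q_pos.le, by linarith⟩ (t := 20 * √n) (by positivity) x
    refine le_trans ?_ accuracy
    have K_sq_ge : (1 / 2 : ℝ) ^ 2 ≤ ((1 - 2 * q) ^ n) ^ 2 := by gcongr
    rw [Fintype.card_fin, mul_pow, Real.sq_sqrt (by positivity), le_sub_comm, div_div,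
      div_le_iff₀ (by positivity)]
    nlinarith
end

section
/- Let n ≥ 1 and t be integers with 1 ≤ t ≤ n, set B := n/t, and let E be a nonempty subset of [n] = {1,…,n}. For a uniformly random permutation π of [n], let E_π := E ∩ π^{−1}({1,…,t}). Then Pr_π[ | |E_π|·B − |E| | ≥ 10·√(B·|E|) ] ≤ 0.01. -/
/-!
For an injective sample `π i`, `i ∈ E`, of a function `f` with mean zero, distinct terms are
negatively correlated: conditioned on `π i = x`, the other values `π j` are uniform on the rest of
the population, whose `f`-values sum to `-f x`. Hence the second moment of `∑ i ∈ E, f (π i)` is at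
most what it would be for independent samples, namely `|E|` times the mean of `f ^ 2`. The error of
the estimate `|E_π| * B` of `|E|` is such a sum, for a function whose square has mean `B - 1`, and
Chebyshev's inequality concludes.
-/

open Finset Equiv
open scoped BigOperators

theorem card_filter_le_abs_div_card_le {ι K : Type*} [Fintype ι] [Field K] [LinearOrder K]
    [IsStrictOrderedRing K] (X : ι → K) {c : K} (hc : 0 < c) :
    (#{i | c ≤ |X i|} : K) / Fintype.card ι ≤ (𝔼 i, X i ^ 2) / c ^ 2 := by
  have markov : #{i | c ≤ |X i|} * c ^ 2 ≤ ∑ i, X i ^ 2 := calc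
    #{i | c ≤ |X i|} * c ^ 2 = #{i | c ≤ |X i|} • c ^ 2 := (nsmul_eq_mul _ _).symm
    _ ≤ ∑ i with c ≤ |X i|, X i ^ 2 := card_nsmul_le_sum _ _ _ fun i hi ↦ by
      rw [← sq_abs (X i)]
      exact pow_le_pow_left₀ hc.le (mem_filter.mp hi).2 2
    _ ≤ ∑ i, X i ^ 2 := sum_le_univ_sum_of_nonneg fun i ↦ sq_nonneg (X i)
  rw [Fintype.expect_eq_sum_div_card, div_right_comm]
  gcongr
  rwa [le_div_iff₀ (by positivity)]

section PermAverages

variable {α : Type*} [Fintype α] [DecidableEq α]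

theorem expect_perm_mul_right {M : Type*} [AddCommMonoid M] [Module ℚ≥0 M] (F : Perm α → M)
    (σ : Perm α) : 𝔼 π, F (π * σ) = 𝔼 π, F π :=
  Fintype.expect_equiv (Equiv.mulRight σ) _ _ fun _ ↦ rfl

theorem expect_perm_apply {M : Type*} [AddCommMonoid M] [Module ℚ≥0 M] (F : α → M) (i : α) :
    𝔼 π : Perm α, F (π i) = 𝔼 x, F x := by
  have : Nonempty α := ⟨i⟩
  have apply_eq (k : α) : 𝔼 π : Perm α, F (π k) = 𝔼 π : Perm α, F (π i) := by
    simpa using expect_perm_mul_right (fun π ↦ F (π i)) (swap i k)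
  calc 𝔼 π : Perm α, F (π i)
    _ = 𝔼 k, 𝔼 π : Perm α, F (π k) := by simp only [apply_eq, Fintype.expect_const]
    _ = 𝔼 π : Perm α, 𝔼 k, F (π k) := expect_comm ..
    _ = 𝔼 _π : Perm α, 𝔼 x, F x :=
      expect_congr rfl fun π _ ↦ Fintype.expect_equiv π _ _ fun _ ↦ rfl
    _ = 𝔼 x, F x := Fintype.expect_const _

theorem card_sub_one_mul_expect_perm_mul {R : Type*} [Ring R] [Module ℚ≥0 R] (f : α → R)
    {g : α → R} (hg : ∑ x, g x = 0) {i j : α} (hij : i ≠ j) :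
    (Fintype.card α - 1) * 𝔼 π : Perm α, f (π i) * g (π j) = -𝔼 x, f x * g x := by
  have apply_eq : ∀ k ∈ univ.erase i,
      𝔼 π : Perm α, f (π i) * g (π k) = 𝔼 π : Perm α, f (π i) * g (π j) := fun k hk ↦ by
    simpa [swap_apply_of_ne_of_ne hij (ne_of_mem_erase hk).symm] using
      expect_perm_mul_right (fun π ↦ f (π i) * g (π j)) (swap j k)
  have card_erase : (#(univ.erase i) : R) = Fintype.card α - 1 := by
    rw [cast_card_erase_of_mem (mem_univ i), card_univ]
  rw [eq_neg_iff_add_eq_zero]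
  calc (Fintype.card α - 1) * (𝔼 π : Perm α, f (π i) * g (π j)) + 𝔼 x, f x * g x
    _ = ∑ k, 𝔼 π : Perm α, f (π i) * g (π k) := by
      rw [← sum_erase_add _ _ (mem_univ i), sum_congr rfl apply_eq, sum_const, nsmul_eq_mul,
        card_erase, expect_perm_apply (fun x ↦ f x * g x)]
    _ = 𝔼 π : Perm α, f (π i) * ∑ k, g (π k) := by
      simp only [← expect_sum_comm, mul_sum]
    _ = 0 := by simp only [Equiv.sum_comp, hg, mul_zero, expect_const_zero]

variable {K : Type*} [Field K] [LinearOrder K] [IsStrictOrderedRing K] {f : α → K}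

theorem expect_perm_mul_self_nonpos (hf : ∑ x, f x = 0) {i j : α} (hij : i ≠ j) :
    𝔼 π : Perm α, f (π i) * f (π j) ≤ 0 := by
  have one_lt_card : (1 : K) < Fintype.card α :=
    mod_cast Fintype.one_lt_card_iff.mpr ⟨i, j, hij⟩
  refine nonpos_of_mul_nonpos_right ?_ (sub_pos.mpr one_lt_card)
  rw [card_sub_one_mul_expect_perm_mul f hf hij, neg_nonpos]
  exact expect_nonneg fun x _ ↦ mul_self_nonneg (f x)

theorem expect_perm_sum_sq_le (hf : ∑ x, f x = 0) (E : Finset α) :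
    𝔼 π : Perm α, (∑ i ∈ E, f (π i)) ^ 2 ≤ #E * 𝔼 x, f x ^ 2 := calc
  𝔼 π : Perm α, (∑ i ∈ E, f (π i)) ^ 2
  _ = ∑ i ∈ E, ∑ j ∈ E, 𝔼 π : Perm α, f (π i) * f (π j) := by
    simp only [sq, sum_mul_sum, expect_sum_comm]
  _ ≤ ∑ i ∈ E, 𝔼 π : Perm α, f (π i) * f (π i) := sum_le_sum fun i hi ↦ by
    rw [← add_sum_erase E _ hi]
    exact add_le_of_nonpos_right <| sum_nonpos fun j hj ↦
      expect_perm_mul_self_nonpos hf (ne_of_mem_erase hj).symm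
  _ = #E * 𝔼 x, f x ^ 2 := by
    simp only [expect_perm_apply (fun x ↦ f x * f x), sum_const, nsmul_eq_mul, sq]

end PermAverages

section SamplingError

variable {α : Type*} [Fintype α] [DecidableEq α]

/-- The sampling error of a single element that lands at `x`, when the size of a set is estimated
by the number of its elements that land in `T`, scaled by `|α| / |T|`: the element contributes
`|α| / |T|` or `0` to the estimate and `1` to the size. -/
noncomputable def samplingError (T : Finset α) (x : α) : ℝ :=
  (if x ∈ T then (Fintype.card α : ℝ) / #T else 0) - 1

theorem sum_samplingError_comp {ι : Type*} (T : Finset α) (E : Finset ι) (g : ι → α) :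
    ∑ i ∈ E, samplingError T (g i) = #{i ∈ E | g i ∈ T} * ((Fintype.card α : ℝ) / #T) - #E := by
  simp only [samplingError, sum_sub_distrib, ← sum_filter, sum_const, nsmul_eq_mul, mul_one]

theorem sum_samplingError {T : Finset α} (hT : T.Nonempty) : ∑ x, samplingError T x = 0 := by
  have card_ne_zero : (#T : ℝ) ≠ 0 := mod_cast hT.card_ne_zero
  rw [sum_samplingError_comp T univ fun x ↦ x, filter_univ_mem, card_univ,
    mul_div_cancel₀ _ card_ne_zero, sub_self]

theorem samplingError_sq (T : Finset α) (x : α) :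
    samplingError T x ^ 2 =
      ((Fintype.card α : ℝ) / #T - 2) * samplingError T x + ((Fintype.card α : ℝ) / #T - 1) := by
  unfold samplingError
  split_ifs <;> ring

theorem expect_samplingError_sq {T : Finset α} (hT : T.Nonempty) :
    𝔼 x, samplingError T x ^ 2 = (Fintype.card α : ℝ) / #T - 1 := by
  have : Nonempty α := hT.to_type
  have expect_eq_zero : 𝔼 x, samplingError T x = 0 := by
    rw [Fintype.expect_eq_sum_div_card, sum_samplingError hT, zero_div]
  simp only [samplingError_sq, expect_add_distrib, ← mul_expect, expect_eq_zero, mul_zero,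
    Fintype.expect_const, zero_add]

end SamplingError

theorem stmt_12_general {α : Type*} [Fintype α] [DecidableEq α] {T E : Finset α}
    (hT : T.Nonempty) (hE : E.Nonempty) {c : ℝ} (hc : 0 < c) :
    (#{π : Perm α | c * √((Fintype.card α : ℝ) / #T * #E) ≤
        |#{i ∈ E | π i ∈ T} * ((Fintype.card α : ℝ) / #T) - #E|} : ℝ) /
      Fintype.card (Perm α) ≤ 1 / c ^ 2 := by
  have : Nonempty α := hT.to_type
  have bound_pos : 0 < (Fintype.card α : ℝ) / #T * #E := by
    have := hT.card_pos
    have := hE.card_pos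
    positivity
  have second_moment_le : 𝔼 π : Perm α, (∑ i ∈ E, samplingError T (π i)) ^ 2 ≤
      (Fintype.card α : ℝ) / #T * #E := calc
    _ ≤ #E * ((Fintype.card α : ℝ) / #T - 1) :=
      expect_samplingError_sq hT ▸ expect_perm_sum_sq_le (sum_samplingError hT) E
    _ ≤ (Fintype.card α : ℝ) / #T * #E := by
      rw [mul_comm]
      gcongr
      exact sub_le_self _ zero_le_one
  simp only [← sum_samplingError_comp]
  refine (card_filter_le_abs_div_card_le _ (mul_pos hc (Real.sqrt_pos.mpr bound_pos))).trans ?_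
  rw [mul_pow, Real.sq_sqrt bound_pos.le, div_le_div_iff₀ (by positivity) (by positivity),
    one_mul, mul_comm]
  gcongr

/-- subsampling via a uniformly random permutation estimates the
size of a set: `Pr_π[ | |E ∩ π⁻¹({1,…,t})|·(n/t) − |E| | ≥ 10·√((n/t)·|E|) ] ≤ 0.01`. -/
theorem stmt_12 (n t : ℕ) (hn : 1 ≤ n) (ht1 : 1 ≤ t) (htn : t ≤ n)
    (E : Finset (Fin n)) (hE : E.Nonempty) :
    ((Finset.univ.filter (fun π : Equiv.Perm (Fin n) =>
        10 * Real.sqrt (((n : ℝ) / (t : ℝ)) * (E.card : ℝ)) ≤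
          |((E.filter (fun i => (π i : ℕ) < t)).card : ℝ) * ((n : ℝ) / (t : ℝ)) -
            (E.card : ℝ)|)).card : ℝ) /
      (Fintype.card (Equiv.Perm (Fin n)) : ℝ) ≤ 0.01 := by
  have card_T : #{k : Fin n | (k : ℕ) < t} = t := by simp [Fin.card_filter_val_lt, htn]
  have T_nonempty : ({k : Fin n | (k : ℕ) < t} : Finset (Fin n)).Nonempty :=
    card_pos.mp (card_T.symm ▸ ht1)
  have := stmt_12_general T_nonempty hE (c := 10) (by norm_num)
  simp only [card_T, Fintype.card_fin, mem_filter_univ] at this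
  exact this.trans_eq (by norm_num)
end
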